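/- Fix N ≥ 1. Let x = (y, x_na) ∈ ℝ^{ny}×ℝ^{n−ny}, inputs c₀,…,c_{N−1} ∈ ℝ^m, uncertainties p₀,…,p_{N−1} ∈ ℝ^q, and predictions x̂₀ := x, x̂_{j+1} := Φ_K x̂_j + G c_j + B_p p_j. Write w := (x_na, p₀, …, p_{N−1}) and z := (y, c₀, …, c_{N−1}). Suppose symmetric F_N, matrix D_N, symmetric E_N satisfy x̂_Nᵀ P x̂_N = wᵀ F_N w + 2 wᵀ D_N z + zᵀ E_N z identically in (w,z); for each i ∈ {0,…,N−1}, symmetric Zᵢ, matrix Mᵢ, symmetric Nᵢ satisfy ‖C_K x̂ᵢ + D_q cᵢ‖₂² − ‖pᵢ‖₂² = wᵀ Zᵢ w + 2 wᵀ Mᵢ z + zᵀ Nᵢ z identically; and S̄ := blockdiag(−S, 0). Let τ₀,…,τ_N ≥ 0 with Θ := −F_N − Σ_{i=0}^{N−1} τᵢ Zᵢ − τ_N S̄ ≻ 0, L_N with L_Nᵀ L_N = E_N + Σ τᵢ Nᵢ + (D_N + Σ τᵢ Mᵢ)ᵀ Θ^{-1} (D_N + Σ τᵢ Mᵢ), and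 suppose [[ρ − τ_N , −(L_N z)ᵀ],[−L_N z , I]] ⪰ 0. Then for all x_na with x_naᵀ S x_na ≤ 1 and all p₀,…,p_{N−1} with ‖pᵢ‖₂² ≤ ‖C_K x̂ᵢ + D_q cᵢ‖₂² for each i, the terminal predicted state satisfies x̂_Nᵀ P x̂_N ≤ ρ, i.e. x̂_N lies in the terminal ellipsoid ζ = {x : xᵀ P x ≤ ρ}. -/

import Mathlib

/-!
The argument is the S-procedure followed by a completion of squares. With `z = (y, c)` and
`w = (x_na, p)`, the constraints make each `‖C_K x̂ᵢ + D_q cᵢ‖² - ‖pᵢ‖²` and `1 - x_naᵀ S x_na`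
nonnegative; adding them to `x̂_Nᵀ P x̂_N` with the nonnegative multipliers `τᵢ`, `τ'` gives
`x̂_Nᵀ P x̂_N ≤ -wᵀ Θ w + 2 wᵀ D z + zᵀ E z + τ'`, where `D = D_N + ∑ τᵢ Mᵢ` and
`E = E_N + ∑ τᵢ Nᵢ`. Maximizing over `w` (`two_dotProduct_le_of_posDef`) bounds the right-hand side
by `zᵀ (E + Dᵀ Θ⁻¹ D) z + τ' = ‖L z‖² + τ'`, and the LMI says `‖L z‖² ≤ ρ - τ'`
(`dotProduct_self_le_of_lmi`).
-/

open Matrix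

/-- The `j`-step-ahead prediction `x̂_j` generated by
`x̂_0 = x0`, `x̂_{j+1} = Φ_K x̂_j + G c_j + B_p p_j`. -/
def pred {n : Type*} [Fintype n] {m q : ℕ} (ΦK : Matrix n n ℝ)
    (G : Matrix n (Fin m) ℝ) (Bp : Matrix n (Fin q) ℝ)
    (x0 : n → ℝ) (c : ℕ → Fin m → ℝ) (p : ℕ → Fin q → ℝ) : ℕ → n → ℝ
  | 0 => x0
  | j + 1 => ΦK *ᵥ pred ΦK G Bp x0 c p j + G *ᵥ c j + Bp *ᵥ p j

/-- Young's inequality weighted by a positive definite matrix: the quadratic form of `Θ` is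
nonnegative at `w - Θ⁻¹ v`. -/
lemma two_dotProduct_le_of_posDef {ι : Type*} [Fintype ι] [DecidableEq ι] {Θ : Matrix ι ι ℝ}
    (hΘ : Θ.PosDef) (w v : ι → ℝ) :
    2 * (w ⬝ᵥ v) ≤ w ⬝ᵥ (Θ *ᵥ w) + v ⬝ᵥ (Θ⁻¹ *ᵥ v) := by
  have h := hΘ.posSemidef.dotProduct_mulVec_nonneg (w - Θ⁻¹ *ᵥ v)
  have hdet : IsUnit Θ.det := (Matrix.isUnit_iff_isUnit_det _).mp hΘ.isUnit
  have hinv : Θ *ᵥ (Θ⁻¹ *ᵥ v) = v := by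
    rw [mulVec_mulVec, mul_nonsing_inv _ hdet, one_mulVec]
  have hsymm : Θᵀ = Θ := by simpa using hΘ.isHermitian.eq
  have hcross : (Θ⁻¹ *ᵥ v) ⬝ᵥ (Θ *ᵥ w) = w ⬝ᵥ v := by
    rw [dotProduct_mulVec, ← mulVec_transpose, hsymm, hinv, dotProduct_comm]
  rw [star_trivial, mulVec_sub, hinv, sub_dotProduct, dotProduct_sub, dotProduct_sub, hcross,
    dotProduct_comm (Θ⁻¹ *ᵥ v) v] at h
  linarith

/-- One direction of the Schur complement test for a scalar block bordered by `-u`,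
obtained by evaluating the quadratic form at `(1, u)`. -/
lemma dotProduct_self_le_of_lmi {s : ℕ} (a : ℝ) (u : Fin s → ℝ)
    (h : (Matrix.fromBlocks
        (Matrix.of fun (_ : Fin 1) (_ : Fin 1) => a)
        (Matrix.of fun (_ : Fin 1) (j : Fin s) => -(u j))
        (Matrix.of fun (i : Fin s) (_ : Fin 1) => -(u i))
        (1 : Matrix (Fin s) (Fin s) ℝ)).PosSemidef) :
    u ⬝ᵥ u ≤ a := by
  have h1 := h.dotProduct_mulVec_nonneg (Sum.elim (fun _ => 1) u)
  rw [star_trivial, fromBlocks_mulVec] at h1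
  simp [dotProduct, mulVec, Fintype.sum_sum_type] at h1
  simpa [dotProduct] using h1

lemma dotProduct_sum_smul_mulVec {ι κ α : Type*} [Fintype ι] [Fintype κ] [Fintype α]
    (t : α → ℝ) (A : α → Matrix ι κ ℝ) (w : ι → ℝ) (z : κ → ℝ) :
    w ⬝ᵥ ((∑ i, t i • A i) *ᵥ z) = ∑ i, t i * (w ⬝ᵥ (A i *ᵥ z)) := by
  simp [sum_mulVec, dotProduct_sum, smul_mulVec]

theorem stmt_17
    {ny nna m q s : ℕ} (N : ℕ) (hN : 1 ≤ N)
    (ΦK : Matrix (Fin ny ⊕ Fin nna) (Fin ny ⊕ Fin nna) ℝ)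
    (G : Matrix (Fin ny ⊕ Fin nna) (Fin m) ℝ)
    (Bp : Matrix (Fin ny ⊕ Fin nna) (Fin q) ℝ)
    (CK : Matrix (Fin q) (Fin ny ⊕ Fin nna) ℝ)
    (Dq : Matrix (Fin q) (Fin m) ℝ)
    (Pm : Matrix (Fin ny ⊕ Fin nna) (Fin ny ⊕ Fin nna) ℝ) (hPm : Pm.PosDef)
    (ρ : ℝ) (hρ : 0 < ρ)
    (S : Matrix (Fin nna) (Fin nna) ℝ) (hS : S.PosSemidef)
    (y : Fin ny → ℝ) (c : ℕ → Fin m → ℝ)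
    (Fm : Matrix (Fin nna ⊕ (Fin N × Fin q)) (Fin nna ⊕ (Fin N × Fin q)) ℝ) (hFms : Fm.IsSymm)
    (Dm : Matrix (Fin nna ⊕ (Fin N × Fin q)) (Fin ny ⊕ (Fin N × Fin m)) ℝ)
    (Em : Matrix (Fin ny ⊕ (Fin N × Fin m)) (Fin ny ⊕ (Fin N × Fin m)) ℝ) (hEms : Em.IsSymm)
    (hFDE : ∀ (y' : Fin ny → ℝ) (xna' : Fin nna → ℝ)
        (c' : ℕ → Fin m → ℝ) (p' : ℕ → Fin q → ℝ),
      (pred ΦK G Bp (Sum.elim y' xna') c' p' N) ⬝ᵥ (Pm *ᵥ pred ΦK G Bp (Sum.elim y' xna') c' p' N)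
      = (Sum.elim xna' (fun ij => p' ij.1 ij.2) : Fin nna ⊕ (Fin N × Fin q) → ℝ) ⬝ᵥ (Fm *ᵥ (Sum.elim xna' (fun ij => p' ij.1 ij.2) : Fin nna ⊕ (Fin N × Fin q) → ℝ)) +
        2 * ((Sum.elim xna' (fun ij => p' ij.1 ij.2) : Fin nna ⊕ (Fin N × Fin q) → ℝ) ⬝ᵥ (Dm *ᵥ (Sum.elim y' (fun ij => c' ij.1 ij.2) : Fin ny ⊕ (Fin N × Fin m) → ℝ))) +
        (Sum.elim y' (fun ij => c' ij.1 ij.2) : Fin ny ⊕ (Fin N × Fin m) → ℝ) ⬝ᵥ (Em *ᵥ (Sum.elim y' (fun ij => c' ij.1 ij.2) : Fin ny ⊕ (Fin N × Fin m) → ℝ)))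
    (Zm : Fin N → Matrix (Fin nna ⊕ (Fin N × Fin q)) (Fin nna ⊕ (Fin N × Fin q)) ℝ) (hZs : ∀ i, (Zm i).IsSymm)
    (Mm : Fin N → Matrix (Fin nna ⊕ (Fin N × Fin q)) (Fin ny ⊕ (Fin N × Fin m)) ℝ)
    (Nm : Fin N → Matrix (Fin ny ⊕ (Fin N × Fin m)) (Fin ny ⊕ (Fin N × Fin m)) ℝ) (hNs : ∀ i, (Nm i).IsSymm)
    (hZMN : ∀ (i : Fin N) (y' : Fin ny → ℝ) (xna' : Fin nna → ℝ)
        (c' : ℕ → Fin m → ℝ) (p' : ℕ → Fin q → ℝ),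
      (CK *ᵥ pred ΦK G Bp (Sum.elim y' xna') c' p' (i : ℕ) + Dq *ᵥ c' i) ⬝ᵥ
          (CK *ᵥ pred ΦK G Bp (Sum.elim y' xna') c' p' (i : ℕ) + Dq *ᵥ c' i) -
        (p' i) ⬝ᵥ (p' i)
      = (Sum.elim xna' (fun ij => p' ij.1 ij.2) : Fin nna ⊕ (Fin N × Fin q) → ℝ) ⬝ᵥ ((Zm i) *ᵥ (Sum.elim xna' (fun ij => p' ij.1 ij.2) : Fin nna ⊕ (Fin N × Fin q) → ℝ)) +
        2 * ((Sum.elim xna' (fun ij => p' ij.1 ij.2) : Fin nna ⊕ (Fin N × Fin q) → ℝ) ⬝ᵥ ((Mm i) *ᵥ (Sum.elim y' (fun ij => c' ij.1 ij.2) : Fin ny ⊕ (Fin N × Fin m) → ℝ))) +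
        (Sum.elim y' (fun ij => c' ij.1 ij.2) : Fin ny ⊕ (Fin N × Fin m) → ℝ) ⬝ᵥ ((Nm i) *ᵥ (Sum.elim y' (fun ij => c' ij.1 ij.2) : Fin ny ⊕ (Fin N × Fin m) → ℝ)))
    (Sbar : Matrix (Fin nna ⊕ (Fin N × Fin q)) (Fin nna ⊕ (Fin N × Fin q)) ℝ)
    (hSbar : Sbar = Matrix.fromBlocks (-S) 0 0 0)
    (τ : Fin N → ℝ) (hτ : ∀ i, 0 ≤ τ i) (τ' : ℝ) (hτ'0 : 0 ≤ τ')
    (Θ : Matrix (Fin nna ⊕ (Fin N × Fin q)) (Fin nna ⊕ (Fin N × Fin q)) ℝ)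
    (hΘ : Θ = -Fm - (∑ i, τ i • Zm i) - τ' • Sbar) (hΘpos : Θ.PosDef)
    (L : Matrix (Fin s) (Fin ny ⊕ (Fin N × Fin m)) ℝ)
    (hL : Lᵀ * L = Em + (∑ i, τ i • Nm i) +
      (Dm + ∑ i, τ i • Mm i)ᵀ * Θ⁻¹ * (Dm + ∑ i, τ i • Mm i))
    (hLMI : (Matrix.fromBlocks
        (Matrix.of fun (_ : Fin 1) (_ : Fin 1) => ρ - τ')
        (Matrix.of fun (_ : Fin 1) (j : Fin s) => -((L *ᵥ (Sum.elim y (fun ij => c ij.1 ij.2) : Fin ny ⊕ (Fin N × Fin m) → ℝ)) j))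
        (Matrix.of fun (i : Fin s) (_ : Fin 1) => -((L *ᵥ (Sum.elim y (fun ij => c ij.1 ij.2) : Fin ny ⊕ (Fin N × Fin m) → ℝ)) i))
        (1 : Matrix (Fin s) (Fin s) ℝ)).PosSemidef) :
    ∀ (xna : Fin nna → ℝ) (p : ℕ → Fin q → ℝ),
      xna ⬝ᵥ (S *ᵥ xna) ≤ 1 →
      (∀ i : Fin N,
        (p i) ⬝ᵥ (p i) ≤
          (CK *ᵥ pred ΦK G Bp (Sum.elim y xna) c p (i : ℕ) + Dq *ᵥ c i) ⬝ᵥ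
            (CK *ᵥ pred ΦK G Bp (Sum.elim y xna) c p (i : ℕ) + Dq *ᵥ c i)) →
      ((pred ΦK G Bp (Sum.elim y xna) c p N) ⬝ᵥ (Pm *ᵥ pred ΦK G Bp (Sum.elim y xna) c p N)) ≤ ρ := by
  intro xna p hx hp
  have hF := hFDE y xna c p
  have hZ := fun i => hZMN i y xna c p
  set z : Fin ny ⊕ (Fin N × Fin m) → ℝ := Sum.elim y (fun ij => c ij.1 ij.2) with hz
  set w : Fin nna ⊕ (Fin N × Fin q) → ℝ := Sum.elim xna (fun ij => p ij.1 ij.2) with hw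
  have hLz := dotProduct_self_le_of_lmi _ _ hLMI
  have hyoung := two_dotProduct_le_of_posDef hΘpos w ((Dm + ∑ i, τ i • Mm i) *ᵥ z)
  have hSw : w ⬝ᵥ (Sbar *ᵥ w) = -(xna ⬝ᵥ (S *ᵥ xna)) := by
    rw [hSbar, hw, fromBlocks_mulVec]
    simp [dotProduct, Fintype.sum_sum_type, neg_mulVec]
  have hΘw : w ⬝ᵥ (Θ *ᵥ w) = -(w ⬝ᵥ (Fm *ᵥ w)) - ∑ i, τ i * (w ⬝ᵥ (Zm i *ᵥ w))
      + τ' * (xna ⬝ᵥ (S *ᵥ xna)) := by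
    rw [hΘ, sub_mulVec, sub_mulVec, neg_mulVec, dotProduct_sub, dotProduct_sub, dotProduct_neg,
      dotProduct_sum_smul_mulVec, smul_mulVec, dotProduct_smul, hSw, smul_eq_mul]
    ring
  have hDz : w ⬝ᵥ ((Dm + ∑ i, τ i • Mm i) *ᵥ z)
      = w ⬝ᵥ (Dm *ᵥ z) + ∑ i, τ i * (w ⬝ᵥ (Mm i *ᵥ z)) := by
    rw [add_mulVec, dotProduct_add, dotProduct_sum_smul_mulVec]
  have hLL : (L *ᵥ z) ⬝ᵥ (L *ᵥ z) = z ⬝ᵥ (Em *ᵥ z) + ∑ i, τ i * (z ⬝ᵥ (Nm i *ᵥ z))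
      + ((Dm + ∑ i, τ i • Mm i) *ᵥ z) ⬝ᵥ (Θ⁻¹ *ᵥ ((Dm + ∑ i, τ i • Mm i) *ᵥ z)) := by
    have hadj : ∀ {κ : Type} [Fintype κ] (A : Matrix κ (Fin ny ⊕ (Fin N × Fin m)) ℝ) (v : κ → ℝ),
        (A *ᵥ z) ⬝ᵥ v = z ⬝ᵥ (Aᵀ *ᵥ v) := fun A v => by
      rw [dotProduct_mulVec, vecMul_transpose]
    rw [hadj L, mulVec_mulVec, hL, add_mulVec, add_mulVec, dotProduct_add, dotProduct_add,
      dotProduct_sum_smul_mulVec, hadj, mulVec_mulVec, mulVec_mulVec]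
  -- The S-procedure: the weighted constraints have a nonnegative sum.
  have hsum : 0 ≤ ∑ i, τ i * (w ⬝ᵥ (Zm i *ᵥ w)) + 2 * ∑ i, τ i * (w ⬝ᵥ (Mm i *ᵥ z))
      + ∑ i, τ i * (z ⬝ᵥ (Nm i *ᵥ z)) := by
    rw [Finset.mul_sum, ← Finset.sum_add_distrib, ← Finset.sum_add_distrib]
    refine Finset.sum_nonneg fun i _ => ?_
    have h := mul_nonneg (hτ i) ((sub_nonneg.mpr (hp i)).trans_eq (hZ i))
    linarith
  have hτx := mul_le_mul_of_nonneg_left hx hτ'0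
  rw [hF]
  linarith
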